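/- For any 0 < t ≤ s ≤ T, the forward process satisfies E‖∇log p_t(x_t) − ∇log p_s(x_s)‖² ≤ 4·E‖∇log p_t(x_t) − ∇log p_t(α_{t,s}^{−1}·x_s)‖² + 2·E‖∇log p_t(x_t)‖²·(1 − α_{t,s}^{−1})², where the expectations are over the joint forward coupling of (x_t, x_s). -/

import Mathlib

open MeasureTheory Real

noncomputable section

namespace DiffusionKL

/-- Euclidean space `ℝ^d`. -/
abbrev Vec (d : ℕ) := EuclideanSpace ℝ (Fin d)

/-- Density of the isotropic Gaussian `N(m, v·I_d)` on `ℝ^d`. -/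
def gaussDensity (d : ℕ) (m : Vec d) (v : ℝ) (x : Vec d) : ℝ :=
  (2 * π * v) ^ (-(d : ℝ) / 2) * Real.exp (-‖x - m‖ ^ 2 / (2 * v))

/-- The isotropic Gaussian measure `N(m, v·I_d)` on `ℝ^d`. -/
def gaussMeasure (d : ℕ) (m : Vec d) (v : ℝ) : Measure (Vec d) :=
  MeasureTheory.volume.withDensity (fun x => ENNReal.ofReal (gaussDensity d m v x))

/-- The standard Gaussian measure `γ_d = N(0, I_d)` on `ℝ^d`. -/
def stdGauss (d : ℕ) : Measure (Vec d) := gaussMeasure d 0 1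

/-- Kullback-Leibler divergence `KL(μ ‖ ν) = ∫ log (dμ/dν) dμ`. -/
def KLdiv {d : ℕ} (μ ν : Measure (Vec d)) : ℝ :=
  ∫ x, Real.log ((μ.rnDeriv ν x).toReal) ∂μ

/-- `G_{t,s} = ∫_t^s g(u)² du`. -/
def Gvar (g : ℝ → ℝ) (t s : ℝ) : ℝ := ∫ u in t..s, (g u) ^ 2

/-- `α_{t,s} = exp(−G_{t,s}/2)`. -/
def alphaF (g : ℝ → ℝ) (t s : ℝ) : ℝ := Real.exp (-(Gvar g t s) / 2)

/-- `σ_t² = 1 − exp(−G_t)`. -/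
def sigmaSq (g : ℝ → ℝ) (t : ℝ) : ℝ := 1 - Real.exp (-(Gvar g 0 t))

/-- The law of the forward marginal `x_t = α_t X₀ + σ_t Z`, `X₀ ∼ P`, `Z ∼ N(0,I_d)` indep. -/
def forwardLaw (d : ℕ) (P : Measure (Vec d)) (g : ℝ → ℝ) (t : ℝ) : Measure (Vec d) :=
  Measure.map (fun q : Vec d × Vec d => alphaF g 0 t • q.1 + Real.sqrt (sigmaSq g t) • q.2)
    (P.prod (stdGauss d))

/-- Explicit density of the forward marginal `p_t` (for `t > 0`). -/
def forwardDensity (d : ℕ) (P : Measure (Vec d)) (g : ℝ → ℝ) (t : ℝ) (x : Vec d) : ℝ :=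
  (2 * π * sigmaSq g t) ^ (-(d : ℝ) / 2) *
    ∫ y, Real.exp (-‖x - alphaF g 0 t • y‖ ^ 2 / (2 * sigmaSq g t)) ∂P

/-- Score function `∇ log p` of a density `p`. -/
def scoreOf {d : ℕ} (p : Vec d → ℝ) (x : Vec d) : Vec d :=
  gradient (fun z => Real.log (p z)) x

/-- Score `∇ log p_t` of the forward marginal at time `t > 0`. -/
def fwdScore (d : ℕ) (P : Measure (Vec d)) (g : ℝ → ℝ) (t : ℝ) : Vec d → Vec d :=
  scoreOf (forwardDensity d P g t)

/-- Underlying measure for the joint forward coupling: `ω = (X₀, Z, Z')`. -/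
def coupleMeasure (d : ℕ) (P : Measure (Vec d)) : Measure (Vec d × Vec d × Vec d) :=
  P.prod ((stdGauss d).prod (stdGauss d))

/-- The forward process at time `t`: `x_t(ω) = α_t X₀ + σ_t Z`. -/
def xt (d : ℕ) (g : ℝ → ℝ) (t : ℝ) (ω : Vec d × Vec d × Vec d) : Vec d :=
  alphaF g 0 t • ω.1 + Real.sqrt (sigmaSq g t) • ω.2.1

/-- The forward process at time `s ≥ t`, coupled with `x_t` by
`x_s = α_{t,s} x_t + √(1−α_{t,s}²) Z'`. -/
def xts (d : ℕ) (g : ℝ → ℝ) (t s : ℝ) (ω : Vec d × Vec d × Vec d) : Vec d :=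
  alphaF g t s • xt d g t ω + Real.sqrt (1 - (alphaF g t s) ^ 2) • ω.2.2

/-- Law of a Markov chain after `n` steps, started at `init`, with transition kernels `κ`. -/
def chainLaw (d : ℕ) (init : Measure (Vec d)) (κ : ℕ → Vec d → Measure (Vec d)) :
    ℕ → Measure (Vec d)
  | 0 => init
  | k + 1 => (chainLaw d init κ k).bind (κ k)

/-- One step of the exponential-integrator sampler:
`ŷ_{k+1} | ŷ_k = a ∼ N(e^{G_{N−k}/2}·a + 2(e^{G_{N−k}/2} − 1)·s(a,t_{N−k}), (e^{G_{N−k}} − 1)·I_d)`. -/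
def EIstep (d N : ℕ) (tp : ℕ → ℝ) (g : ℝ → ℝ) (sc : Vec d → ℝ → Vec d) (k : ℕ) (a : Vec d) :
    Measure (Vec d) :=
  gaussMeasure d
    (Real.exp (Gvar g (tp (N - k - 1)) (tp (N - k)) / 2) • a +
      (2 * (Real.exp (Gvar g (tp (N - k - 1)) (tp (N - k)) / 2) - 1)) • sc a (tp (N - k)))
    (Real.exp (Gvar g (tp (N - k - 1)) (tp (N - k))) - 1)

/-- One step of the Euler–Maruyama sampler:
`ŷ_{k+1} | ŷ_k = a ∼ N((1 + G_{N−k}/2)·a + G_{N−k}·s(a,t_{N−k}), G_{N−k}·I_d)`. -/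
def EMstep (d N : ℕ) (tp : ℕ → ℝ) (g : ℝ → ℝ) (sc : Vec d → ℝ → Vec d) (k : ℕ) (a : Vec d) :
    Measure (Vec d) :=
  gaussMeasure d
    ((1 + Gvar g (tp (N - k - 1)) (tp (N - k)) / 2) • a +
      (Gvar g (tp (N - k - 1)) (tp (N - k))) • sc a (tp (N - k)))
    (Gvar g (tp (N - k - 1)) (tp (N - k)))

/-- Terminal law of the exponential-integrator sampler started at `N(0,I_d)`. -/
def EIlaw (d N : ℕ) (tp : ℕ → ℝ) (g : ℝ → ℝ) (sc : Vec d → ℝ → Vec d) : Measure (Vec d) :=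
  chainLaw d (stdGauss d) (EIstep d N tp g sc) N

/-- Terminal law of the Euler–Maruyama sampler started at `N(0,I_d)`. -/
def EMlaw (d N : ℕ) (tp : ℕ → ℝ) (g : ℝ → ℝ) (sc : Vec d → ℝ → Vec d) : Measure (Vec d) :=
  chainLaw d (stdGauss d) (EMstep d N tp g sc) N

/-- The weighted L² score estimation error
`(1/G_T)·Σ_{k=1}^N G_k·E_{p_{t_k}} ‖∇log p_{t_k}(x) − s(x,t_k)‖²`. -/
def scoreErr (d N : ℕ) (P : Measure (Vec d)) (g : ℝ → ℝ) (tp : ℕ → ℝ)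
    (sc : Vec d → ℝ → Vec d) : ℝ :=
  (1 / Gvar g 0 (tp N)) * ∑ k ∈ Finset.range N,
    Gvar g (tp k) (tp (k + 1)) *
      ∫ x, ‖fwdScore d P g (tp (k + 1)) x - sc x (tp (k + 1))‖ ^ 2
        ∂(forwardLaw d P g (tp (k + 1)))

/-- Entry `(i,j)` of the Hessian matrix `∇²f(x)`. -/
def hessEntry {d : ℕ} (f : Vec d → ℝ) (x : Vec d) (i j : Fin d) : ℝ :=
  fderiv ℝ (fun y => fderiv ℝ f y (EuclideanSpace.single j 1)) x (EuclideanSpace.single i 1)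

/-- Frobenius norm of the Hessian matrix `∇²f(x)`. -/
def hessFrob {d : ℕ} (f : Vec d → ℝ) (x : Vec d) : ℝ :=
  Real.sqrt (∑ i, ∑ j, (hessEntry f x i j) ^ 2)

/-- Density of the Gaussian perturbation `X + σZ`, `X ∼ P`, `Z ∼ N(0,I_d)`. -/
def perturbDensity (d : ℕ) (P : Measure (Vec d)) (σ : ℝ) (x : Vec d) : ℝ :=
  (2 * π * σ ^ 2) ^ (-(d : ℝ) / 2) * ∫ y, Real.exp (-‖x - y‖ ^ 2 / (2 * σ ^ 2)) ∂P

/-- Density of `μY + σZ`, `Y ∼ P`, `Z ∼ N(0,I_d)`. -/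
def perturbDensity' (d : ℕ) (P : Measure (Vec d)) (μ σ : ℝ) (x : Vec d) : ℝ :=
  (2 * π * σ ^ 2) ^ (-(d : ℝ) / 2) * ∫ y, Real.exp (-‖x - μ • y‖ ^ 2 / (2 * σ ^ 2)) ∂P

/-- Law of the Gaussian perturbation `X + σZ`. -/
def perturbLaw (d : ℕ) (P : Measure (Vec d)) (σ : ℝ) : Measure (Vec d) :=
  Measure.map (fun q : Vec d × Vec d => q.1 + σ • q.2)
    (P.prod (MeasureTheory.volume.withDensity
      (fun x : Vec d => ENNReal.ofReal ((2 * π) ^ (-(d : ℝ) / 2) * Real.exp (-‖x‖ ^ 2 / 2)))))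

/-- The tilted conditional measure `dP̃_{μ,σ}(y|x) ∝ exp(−‖x−μy‖²/(2σ²)) dP(y)`. -/
def tiltMeasure (d : ℕ) (P : Measure (Vec d)) (μ σ : ℝ) (x : Vec d) : Measure (Vec d) :=
  ((P.withDensity (fun y => ENNReal.ofReal (Real.exp (-‖x - μ • y‖ ^ 2 / (2 * σ ^ 2))))) Set.univ)⁻¹ •
    P.withDensity (fun y => ENNReal.ofReal (Real.exp (-‖x - μ • y‖ ^ 2 / (2 * σ ^ 2))))

/-- Sub-exponential (ψ₁-Orlicz) norm of `f` under the measure `μ`. -/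
def psi1Norm {α : Type*} [MeasurableSpace α] (μ : Measure α) (f : α → ℝ) : ℝ :=
  sInf {t : ℝ | 0 < t ∧ ∫ x, Real.exp (|f x| / t) ∂μ ≤ 2}

/-- Sub-Gaussian (ψ₂-Orlicz) norm of `f` under the measure `μ`. -/
def psi2Norm {α : Type*} [MeasurableSpace α] (μ : Measure α) (f : α → ℝ) : ℝ :=
  sInf {t : ℝ | 0 < t ∧ ∫ x, Real.exp ((f x) ^ 2 / t ^ 2) ∂μ ≤ 2}

/-!
Along the rescaled forward process `y = α_{t,s}⁻¹ x_s = x_t + ρ Z'` the scores form a reverse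
martingale: `E[∇ log p_t (x_t) | x_s] = α_{t,s} ∇ log p_s (x_s)`. Indeed Tweedie's formula turns
pairings with a score into pairings with the Gaussian noise, and a rotation of the two independent
noises reduces the total noise at time `s` to a single one. So `Q = α_{t,s} ∇ log p_s (x_s)` is the
`L²` projection of `A = ∇ log p_t (x_t)` onto the functions of `x_s`, among which is
`B = ∇ log p_t (y)`, and Pythagoras gives
`E‖A - β Q‖² = E‖A - Q‖² + (1 - β)² E‖Q‖² ≤ E‖A - B‖² + (1 - β)² E‖A‖²` for `β = α_{t,s}⁻¹`.

Square-integrability of `B`, a score evaluated at a noisier point than its own noise level, holds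
because raising the noise level tilts the posterior of the signal towards points farther from `y`,
so that the posterior second moment of `X - y` increases with the noise level.
-/

section SquareIntegrable

variable {α E : Type*} [MeasurableSpace α] {μ : Measure α} [NormedAddCommGroup E]

theorem norm_integral_sq_le [NormedSpace ℝ E] [CompleteSpace E] [IsProbabilityMeasure μ]
    {f : α → E} (hf : MemLp f 2 μ) : ‖∫ x, f x ∂μ‖ ^ 2 ≤ ∫ x, ‖f x‖ ^ 2 ∂μ :=
  (convexOn_univ_norm.pow (fun _ _ => norm_nonneg _) 2).map_integral_le
    (continuous_norm.pow 2).continuousOn isClosed_univ (by simp) (hf.integrable one_le_two)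
    (hf.integrable_norm_pow two_ne_zero)

theorem integral_le_integral_tilted_mul [IsProbabilityMeasure μ] {f : α → ℝ} {k : ℝ}
    (hk : 0 ≤ k) (hf : Integrable f μ) (hexp : Integrable (fun x => Real.exp (k * f x)) μ)
    (hf_tilted : Integrable f (μ.tilted (fun x => k * f x))) :
    ∫ x, f x ∂μ ≤ ∫ x, f x ∂(μ.tilted (fun x => k * f x)) := by
  set m := ∫ x, f x ∂μ with hm
  have hmul := (integrable_tilted_iff hexp f).mp hf_tilted
  have hmonotone (x : α) :
      Real.exp (k * m) * (f x - m) ≤ Real.exp (k * f x) • f x - Real.exp (k * f x) * m := by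
    rw [smul_eq_mul, ← mul_sub]
    rcases le_total m (f x) with h | h
    · exact mul_le_mul_of_nonneg_right (by gcongr) (sub_nonneg.mpr h)
    · exact mul_le_mul_of_nonpos_right (by gcongr) (sub_nonpos.mpr h)
  have hint := integral_mono ((hf.sub (integrable_const m)).const_mul _)
    (hmul.sub (hexp.mul_const m)) hmonotone
  rw [integral_const_mul, integral_sub' hf (integrable_const m),
    integral_sub' hmul (hexp.mul_const m), integral_mul_const, integral_const, ← hm] at hint
  simp only [probReal_univ, one_smul, sub_self, mul_zero, sub_nonneg] at hint
  rw [integral_tilted]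
  simp only [div_eq_inv_mul, mul_smul]
  rw [integral_smul, smul_eq_mul, ← div_eq_inv_mul, le_div_iff₀ (integral_exp_pos hexp), mul_comm]
  exact hint

variable [InnerProductSpace ℝ E] {f g : α → E}

theorem integrable_inner_of_memLp_two (hf : MemLp f 2 μ) (hg : MemLp g 2 μ) :
    Integrable (fun x => inner ℝ (f x) (g x)) μ := by
  refine (L2.integrable_inner (𝕜 := ℝ) (hf.toLp f) (hg.toLp g)).congr ?_
  filter_upwards [hf.coeFn_toLp, hg.coeFn_toLp] with x hfx hgx
  rw [hfx, hgx]

theorem inner_memLp_toLp (hf : MemLp f 2 μ) (hg : MemLp g 2 μ) :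
    inner ℝ (hf.toLp f) (hg.toLp g) = ∫ x, inner ℝ (f x) (g x) ∂μ := by
  rw [L2.inner_def]
  refine integral_congr_ae ?_
  filter_upwards [hf.coeFn_toLp, hg.coeFn_toLp] with x hfx hgx
  rw [hfx, hgx]

theorem norm_memLp_toLp_sq (hf : MemLp f 2 μ) : ‖hf.toLp f‖ ^ 2 = ∫ x, ‖f x‖ ^ 2 ∂μ := by
  simp only [← real_inner_self_eq_norm_sq, inner_memLp_toLp]

theorem norm_sub_smul_sq_le_of_inner_eq {A B Q : E} (hQ : inner ℝ A Q = inner ℝ Q Q)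
    (hB : inner ℝ A B = inner ℝ Q B) (β : ℝ) :
    ‖A - β • Q‖ ^ 2 ≤ ‖A - B‖ ^ 2 + (1 - β) ^ 2 * ‖A‖ ^ 2 := by
  have hAQ : inner ℝ (A - Q) Q = 0 := by rw [inner_sub_left, hQ, sub_self]
  have hAB : inner ℝ (A - Q) (Q - B) = 0 := by
    rw [inner_sub_left, inner_sub_right, inner_sub_right, hQ, hB, sub_self]
  have pythagoras {V : E} (hV : inner ℝ (A - Q) V = 0) :
      ‖A - Q + V‖ ^ 2 = ‖A - Q‖ ^ 2 + ‖V‖ ^ 2 := by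
    rw [norm_add_sq_real, hV, mul_zero, add_zero]
  have hA : ‖A‖ ^ 2 = ‖A - Q‖ ^ 2 + ‖Q‖ ^ 2 := by rw [← pythagoras hAQ, sub_add_cancel]
  have hsub : ‖A - B‖ ^ 2 = ‖A - Q‖ ^ 2 + ‖Q - B‖ ^ 2 := by
    rw [← pythagoras hAB, sub_add_sub_cancel]
  have hβ : ‖A - β • Q‖ ^ 2 = ‖A - Q‖ ^ 2 + (1 - β) ^ 2 * ‖Q‖ ^ 2 := by
    rw [← sq_abs (1 - β), ← norm_eq_abs, ← mul_pow, ← norm_smul,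
      ← pythagoras (by rw [real_inner_smul_right, hAQ, mul_zero])]
    congr 2
    module
  rw [hA, hsub, hβ]
  linarith [sq_nonneg ‖Q - B‖, mul_nonneg (sq_nonneg (1 - β)) (sq_nonneg ‖A - Q‖)]

theorem integral_norm_sub_smul_sq_le_of_integral_inner_eq {A B Q : α → E} (hA : MemLp A 2 μ)
    (hB : MemLp B 2 μ) (hQ : MemLp Q 2 μ)
    (hAQ : ∫ x, inner ℝ (A x) (Q x) ∂μ = ∫ x, inner ℝ (Q x) (Q x) ∂μ)
    (hAB : ∫ x, inner ℝ (A x) (B x) ∂μ = ∫ x, inner ℝ (Q x) (B x) ∂μ) (β : ℝ) :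
    ∫ x, ‖A x - β • Q x‖ ^ 2 ∂μ ≤
      ∫ x, ‖A x - B x‖ ^ 2 ∂μ + (1 - β) ^ 2 * ∫ x, ‖A x‖ ^ 2 ∂μ := by
  have h := norm_sub_smul_sq_le_of_inner_eq (A := hA.toLp A) (B := hB.toLp B) (Q := hQ.toLp Q)
    (by rw [inner_memLp_toLp, inner_memLp_toLp, hAQ])
    (by rw [inner_memLp_toLp, inner_memLp_toLp, hAB]) β
  rwa [← MemLp.toLp_const_smul, ← MemLp.toLp_sub, ← MemLp.toLp_sub, norm_memLp_toLp_sq,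
    norm_memLp_toLp_sq, norm_memLp_toLp_sq] at h

end SquareIntegrable

section Gaussian

open Module ProbabilityTheory
open scoped ENNReal

variable {E : Type*} [NormedAddCommGroup E] [InnerProductSpace ℝ E] [FiniteDimensional ℝ E]
  [MeasurableSpace E] [BorelSpace E]

theorem integrable_exp_neg_mul_sq_norm {b : ℝ} (hb : 0 < b) :
    Integrable (fun x : E => Real.exp (-b * ‖x‖ ^ 2)) := by
  refine not_imp_comm.mp integral_undef (ne_of_gt ?_)
  rw [GaussianFourier.integral_rexp_neg_mul_sq_norm hb]
  positivity

theorem stdGaussian_eq_withDensity :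
    stdGaussian E = volume.withDensity (fun x =>
      ENNReal.ofReal ((2 * π) ^ (-(finrank ℝ E : ℝ) / 2) * Real.exp (-‖x‖ ^ 2 / 2))) := by
  set K : ℝ := (2 * π) ^ (-(finrank ℝ E : ℝ) / 2) with hK
  have hK_pos : 0 < K := by positivity
  have hexp (x : E) : Real.exp (-‖x‖ ^ 2 / 2) = Real.exp (-(1 / 2) * ‖x‖ ^ 2) := by ring_nf
  have : IsFiniteMeasure ((volume : Measure E).withDensity
      (fun x => ENNReal.ofReal (K * Real.exp (-‖x‖ ^ 2 / 2)))) := by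
    simp_rw [hexp]
    exact isFiniteMeasure_withDensity_ofReal
      ((integrable_exp_neg_mul_sq_norm one_half_pos).const_mul K).hasFiniteIntegral
  refine Measure.ext_of_charFun (funext fun w => ?_)
  have hcongr (x : E) : (ENNReal.ofReal (K * Real.exp (-‖x‖ ^ 2 / 2))).toReal •
      Complex.exp (inner ℝ x w * Complex.I) =
      K * Complex.exp (-(1 / 2 : ℂ) * ‖x‖ ^ 2 + Complex.I * inner ℝ w x) := by
    rw [ENNReal.toReal_ofReal (by positivity), real_inner_comm, Complex.exp_add, Complex.real_smul]
    push_cast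
    ring_nf
  have hnorm : (K : ℂ) * (π / (1 / 2 : ℂ)) ^ (finrank ℝ E / 2 : ℂ) = 1 := by
    have h : (π / (1 / 2 : ℂ)) ^ (finrank ℝ E / 2 : ℂ) =
        (((2 * π) ^ ((finrank ℝ E : ℝ) / 2) : ℝ) : ℂ) := by
      rw [Complex.ofReal_cpow (by positivity)]
      push_cast
      ring_nf
    rw [h, ← Complex.ofReal_mul, hK, ← Real.rpow_add (by positivity), neg_div,
      neg_add_cancel, Real.rpow_zero, Complex.ofReal_one]
  rw [charFun_stdGaussian, charFun_apply,
    integral_withDensity_eq_integral_toReal_smul (by fun_prop) (by simp)]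
  simp_rw [hcongr]
  rw [integral_const_mul, GaussianFourier.integral_cexp_neg_mul_sq_norm_add (by norm_num),
    ← mul_assoc, hnorm, Complex.I_sq]
  ring_nf

theorem lintegral_stdGaussian_comp_add_smul {c : ℝ} (hc : 0 < c) (m : E) {f : E → ℝ≥0∞}
    (hf : Measurable f) :
    ∫⁻ z, f (m + c • z) ∂(stdGaussian E) =
      ENNReal.ofReal ((2 * π) ^ (-(finrank ℝ E : ℝ) / 2) * (c ^ finrank ℝ E)⁻¹) *
        ∫⁻ x, ENNReal.ofReal (Real.exp (-‖x - m‖ ^ 2 / (2 * c ^ 2))) * f x := by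
  set K : ℝ := (2 * π) ^ (-(finrank ℝ E : ℝ) / 2)
  set G : E → ℝ≥0∞ := fun u => ENNReal.ofReal (Real.exp (-‖u - m‖ ^ 2 / (2 * c ^ 2))) * f u
    with hG_def
  have hG : Measurable G := by fun_prop
  have hscale (z : E) : ENNReal.ofReal (K * Real.exp (-‖z‖ ^ 2 / 2)) * f (m + c • z) =
      ENNReal.ofReal K * G (m + c • z) := by
    have : ‖c • z‖ ^ 2 / (2 * c ^ 2) = ‖z‖ ^ 2 / 2 := by
      rw [norm_smul, mul_pow, norm_eq_abs, sq_abs]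
      field_simp
    rw [hG_def, ENNReal.ofReal_mul (by positivity), mul_assoc]
    simp only [add_sub_cancel_left, neg_div, this]
  rw [stdGaussian_eq_withDensity, lintegral_withDensity_eq_lintegral_mul _ (by fun_prop)
    (by fun_prop)]
  refine (lintegral_congr hscale).trans ?_
  rw [lintegral_const_mul _ (by fun_prop),
    ← lintegral_map (f := fun u => G (m + u)) (by fun_prop) (by fun_prop),
    Measure.map_addHaar_smul _ hc.ne', lintegral_smul_measure, lintegral_add_left_eq_self,
    smul_eq_mul, ← mul_assoc, ← ENNReal.ofReal_mul (by positivity), abs_of_pos (by positivity)]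

end Gaussian

section Mixture

variable {E Ω : Type*} [NormedAddCommGroup E]

/-- Log-likelihood of the signal `X ω` given the observation `x = X ω + N(0, v·I)`, up to the
normalising constant of the Gaussian, which depends on neither `x` nor `ω`. -/
def gaussLogLik (X : Ω → E) (v : ℝ) (x : E) (ω : Ω) : ℝ := -‖x - X ω‖ ^ 2 / (2 * v)

theorem exp_gaussLogLik_le_one (X : Ω → E) {v : ℝ} (hv : 0 ≤ v) (x : E) (ω : Ω) :
    Real.exp (gaussLogLik X v x ω) ≤ 1 :=
  Real.exp_le_one_iff.mpr (div_nonpos_of_nonpos_of_nonneg (by simp) (by positivity))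

theorem exp_gaussLogLik_mul_norm_sub_sq_le (X : Ω → E) {v : ℝ} (hv : 0 < v) (x : E) (ω : Ω) :
    Real.exp (gaussLogLik X v x ω) * ‖X ω - x‖ ^ 2 ≤ 2 * v := by
  have h := Real.mul_exp_neg_le_exp_neg_one (‖X ω - x‖ ^ 2 / (2 * v))
  have h_one : Real.exp (-1) ≤ 1 := Real.exp_le_one_iff.mpr (by norm_num)
  rw [← neg_div, div_mul_eq_mul_div, div_le_iff₀ (by positivity)] at h
  rw [gaussLogLik, norm_sub_rev x]
  nlinarith

theorem exp_gaussLogLik_mul_norm_sub_le (X : Ω → E) {v : ℝ} (hv : 0 < v) (x : E) (ω : Ω) :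
    Real.exp (gaussLogLik X v x ω) * ‖X ω - x‖ ≤ √(2 * v) := by
  refine Real.le_sqrt_of_sq_le ?_
  calc (Real.exp (gaussLogLik X v x ω) * ‖X ω - x‖) ^ 2
      = Real.exp (gaussLogLik X v x ω) * (Real.exp (gaussLogLik X v x ω) * ‖X ω - x‖ ^ 2) := by ring
    _ ≤ 1 * (2 * v) := mul_le_mul (exp_gaussLogLik_le_one X hv.le x ω)
        (exp_gaussLogLik_mul_norm_sub_sq_le X hv x ω) (by positivity) zero_le_one
    _ = 2 * v := one_mul _

variable [MeasurableSpace Ω]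

/-- Density at `x` of the signal `X` perturbed by independent `N(0, v·I)` noise, without the factor
`(2πv)^{-dim E/2}`, which does not affect the score. -/
def gaussMixture (P : Measure Ω) (X : Ω → E) (v : ℝ) (x : E) : ℝ :=
  ∫ ω, Real.exp (gaussLogLik X v x ω) ∂P

variable [MeasurableSpace E] [BorelSpace E] [SecondCountableTopology E] {X : Ω → E}

theorem measurable_gaussLogLik (hX : Measurable X) (v : ℝ) :
    Measurable (Function.uncurry (gaussLogLik X v)) := by
  simp only [Function.uncurry_def, gaussLogLik]
  fun_prop

theorem measurable_exp_gaussLogLik (hX : Measurable X) (v : ℝ) (x : E) :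
    Measurable fun ω => Real.exp (gaussLogLik X v x ω) :=
  ((measurable_gaussLogLik hX v).comp measurable_prodMk_left).exp

theorem measurable_gaussMixture (P : Measure Ω) [SFinite P] (hX : Measurable X) (v : ℝ) :
    Measurable (gaussMixture P X v) :=
  (measurable_gaussLogLik hX v).exp.stronglyMeasurable.integral_prod_right.measurable

theorem integrable_exp_gaussLogLik (P : Measure Ω) [IsFiniteMeasure P] (hX : Measurable X) {v : ℝ}
    (hv : 0 ≤ v) (x : E) : Integrable (fun ω => Real.exp (gaussLogLik X v x ω)) P :=
  .of_bound (measurable_exp_gaussLogLik hX v x).aestronglyMeasurable 1 <| ae_of_all _ fun ω => by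
    simpa only [Real.norm_eq_abs, Real.abs_exp] using exp_gaussLogLik_le_one X hv x ω

theorem integrable_exp_gaussLogLik_smul_sub [NormedSpace ℝ E] (P : Measure Ω) [IsFiniteMeasure P]
    (hX : Measurable X) {v : ℝ} (hv : 0 < v) (x : E) :
    Integrable (fun ω => Real.exp (gaussLogLik X v x ω) • (X ω - x)) P := by
  have hmeas := measurable_exp_gaussLogLik hX v x
  refine .of_bound (by fun_prop) √(2 * v) (ae_of_all _ fun ω => ?_)
  simpa only [norm_smul, Real.norm_eq_abs, Real.abs_exp] using
    exp_gaussLogLik_mul_norm_sub_le X hv x ω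

theorem gaussMixture_pos (P : Measure Ω) [IsFiniteMeasure P] [NeZero P] (hX : Measurable X) {v : ℝ}
    (hv : 0 ≤ v) (x : E) : 0 < gaussMixture P X v x :=
  integral_exp_pos (integrable_exp_gaussLogLik P hX hv x)

end Mixture

section Score

open InnerProductSpace

variable {E Ω : Type*} [NormedAddCommGroup E] [InnerProductSpace ℝ E] [CompleteSpace E]

theorem hasGradientAt_exp_gaussLogLik (X : Ω → E) {v : ℝ} (hv : v ≠ 0) (x : E) (ω : Ω) :
    HasGradientAt (fun z => Real.exp (gaussLogLik X v z ω))
      (v⁻¹ • Real.exp (gaussLogLik X v x ω) • (X ω - x)) x := by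
  rw [hasGradientAt_iff_hasFDerivAt]
  have hsq := ((hasFDerivAt_id (𝕜 := ℝ) x).sub_const (X ω)).norm_sq
  have hexp := (hsq.mul_const (-(2 * v)⁻¹)).exp
  have hlog (z : E) : gaussLogLik X v z ω = ‖id z - X ω‖ ^ 2 * -(2 * v)⁻¹ := by
    simp only [gaussLogLik, id]
    ring
  simp_rw [hlog]
  refine hexp.congr_fderiv ?_
  ext u
  simp only [id_eq, mul_inv_rev, mul_neg, map_sub, ContinuousLinearMap.comp_id, neg_smul, smul_neg,
    neg_apply, smul_apply, sub_apply, coe_innerSL_apply, nsmul_eq_mul, Nat.cast_ofNat, smul_eq_mul,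
    map_smul, toDual_apply_apply]
  field_simp
  ring

variable [MeasurableSpace Ω]

/-- Score `∇ log p` of the signal `X` perturbed by independent `N(0, v·I)` noise. -/
def mixtureScore (P : Measure Ω) (X : Ω → E) (v : ℝ) (x : E) : E :=
  gradient (fun z => Real.log (gaussMixture P X v z)) x

variable [MeasurableSpace E] [BorelSpace E]

@[fun_prop]
theorem measurable_mixtureScore (P : Measure Ω) (X : Ω → E) (v : ℝ) :
    Measurable (mixtureScore P X v) :=
  (toDual ℝ E).symm.continuous.measurable.comp (measurable_fderiv ℝ _)

variable [SecondCountableTopology E] (P : Measure Ω) [IsFiniteMeasure P] {X : Ω → E}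

theorem hasGradientAt_gaussMixture (hX : Measurable X) {v : ℝ} (hv : 0 < v) (x : E) :
    HasGradientAt (gaussMixture P X v)
      (v⁻¹ • ∫ ω, Real.exp (gaussLogLik X v x ω) • (X ω - x) ∂P) x := by
  have hsmul := integrable_exp_gaussLogLik_smul_sub P hX hv
  have hderiv := hasFDerivAt_integral_of_dominated_of_fderiv_le (𝕜 := ℝ) (μ := P)
    (F := fun z ω => Real.exp (gaussLogLik X v z ω)) (s := Set.univ)
    (F' := fun z ω => innerSL ℝ (v⁻¹ • Real.exp (gaussLogLik X v z ω) • (X ω - z)))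
    (bound := fun _ => v⁻¹ * √(2 * v)) Filter.univ_mem
    (.of_forall fun z => (measurable_exp_gaussLogLik hX v z).aestronglyMeasurable)
    (integrable_exp_gaussLogLik P hX hv.le x)
    ((innerSL ℝ (E := E)).continuous.comp_aestronglyMeasurable
      ((hsmul x).aestronglyMeasurable.const_smul _))
    (ae_of_all _ fun ω z _ => by
      rw [innerSL_apply_norm, norm_smul, norm_smul, Real.norm_of_nonneg (Real.exp_pos _).le,
        Real.norm_of_nonneg (inv_pos.mpr hv).le]
      gcongr
      exact exp_gaussLogLik_mul_norm_sub_le X hv z ω)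
    (integrable_const _)
    (ae_of_all _ fun ω z _ => (hasGradientAt_exp_gaussLogLik X hv.ne' z ω).hasFDerivAt)
  rw [hasGradientAt_iff_hasFDerivAt, ← integral_smul]
  exact hderiv.congr_fderiv ((innerSL ℝ (E := E)).integral_comp_comm ((hsmul x).smul v⁻¹))

end Score

section Posterior

open ProbabilityTheory
open scoped ENNReal

variable {E Ω : Type*} [NormedAddCommGroup E] [MeasurableSpace E] [BorelSpace E]
  [MeasurableSpace Ω]

/-- Posterior law of `ω ∼ P` given that the observation `X ω + N(0, v·I)` takes the value `x`. -/
def gaussPosterior (P : Measure Ω) [SFinite P] (X : Ω → E) (v : ℝ) : Kernel E Ω :=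
  (Kernel.const E P).withDensity fun x ω =>
    ENNReal.ofReal (Real.exp (gaussLogLik X v x ω) / gaussMixture P X v x)

variable [SecondCountableTopology E] {X : Ω → E}

theorem gaussPosterior_apply (P : Measure Ω) [SFinite P] (hX : Measurable X) (v : ℝ) (x : E) :
    gaussPosterior P X v x = P.tilted (gaussLogLik X v x) := by
  have hmeas := (measurable_gaussLogLik hX v).exp.div
    ((measurable_gaussMixture P hX v).comp measurable_fst)
  rw [gaussPosterior, Kernel.withDensity_apply _ hmeas.ennreal_ofReal, Kernel.const_apply]
  rfl

instance isSFiniteKernel_gaussPosterior (P : Measure Ω) [SFinite P] (X : Ω → E) (v : ℝ) :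
    IsSFiniteKernel (gaussPosterior P X v) :=
  Kernel.IsSFiniteKernel.withDensity _ fun _ _ => ENNReal.ofReal_ne_top

theorem isProbabilityMeasure_gaussPosterior (P : Measure Ω) [IsFiniteMeasure P] [NeZero P]
    (hX : Measurable X) {v : ℝ} (hv : 0 ≤ v) (x : E) :
    IsProbabilityMeasure (gaussPosterior P X v x) := by
  rw [gaussPosterior_apply P hX]
  exact isProbabilityMeasure_tilted (integrable_exp_gaussLogLik P hX hv x)

theorem lintegral_exp_gaussLogLik_mul (P : Measure Ω) [IsFiniteMeasure P] [NeZero P]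
    (hX : Measurable X) {v : ℝ} (hv : 0 ≤ v) (x : E) {f : Ω → ℝ≥0∞} (hf : Measurable f) :
    ∫⁻ ω, ENNReal.ofReal (Real.exp (gaussLogLik X v x ω)) * f ω ∂P =
      ENNReal.ofReal (gaussMixture P X v x) * ∫⁻ ω, f ω ∂(gaussPosterior P X v x) := by
  have hpos := gaussMixture_pos P hX hv x
  have hmeas := measurable_exp_gaussLogLik hX v x
  rw [gaussPosterior_apply P hX, lintegral_tilted, ← lintegral_const_mul _ (by fun_prop)]
  refine lintegral_congr fun ω => ?_
  rw [← mul_assoc, ← ENNReal.ofReal_mul hpos.le, ← gaussMixture, mul_div_cancel₀ _ hpos.ne']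

end Posterior

section Bayes

open Module ProbabilityTheory
open scoped ENNReal

variable {E Ω : Type*} [NormedAddCommGroup E] [InnerProductSpace ℝ E] [FiniteDimensional ℝ E]
  [MeasurableSpace E] [BorelSpace E] [MeasurableSpace Ω] {X : Ω → E}

theorem lintegral_add_smul_stdGaussian (P : Measure Ω) [SFinite P] (hX : Measurable X) {c : ℝ}
    (hc : 0 < c) {f : E × Ω → ℝ≥0∞} (hf : Measurable f) :
    ∫⁻ q, f (X q.1 + c • q.2, q.1) ∂(P.prod (stdGaussian E)) =
      ENNReal.ofReal ((2 * π) ^ (-(finrank ℝ E : ℝ) / 2) * (c ^ finrank ℝ E)⁻¹) *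
        ∫⁻ x, ∫⁻ ω, ENNReal.ofReal (Real.exp (gaussLogLik X (c ^ 2) x ω)) * f (x, ω) ∂P := by
  have hmeas : Measurable fun q : E × Ω =>
      ENNReal.ofReal (Real.exp (gaussLogLik X (c ^ 2) q.1 q.2)) * f q :=
    (measurable_gaussLogLik hX _).exp.ennreal_ofReal.mul hf
  rw [lintegral_prod _ (by fun_prop),
    lintegral_lintegral_swap (f := fun x ω =>
      ENNReal.ofReal (Real.exp (gaussLogLik X (c ^ 2) x ω)) * f (x, ω)) hmeas.aemeasurable]
  exact (lintegral_congr fun ω => lintegral_stdGaussian_comp_add_smul hc (X ω)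
    (f := fun x => f (x, ω)) (by fun_prop)).trans
      (lintegral_const_mul _ hmeas.lintegral_prod_left')

theorem map_add_smul_stdGaussian_eq_compProd (P : Measure Ω) [IsFiniteMeasure P] [NeZero P]
    (hX : Measurable X) {c : ℝ} (hc : 0 < c) :
    (P.prod (stdGaussian E)).map (fun q => (X q.1 + c • q.2, q.1)) =
      ((P.prod (stdGaussian E)).map (fun q => X q.1 + c • q.2)) ⊗ₘ gaussPosterior P X (c ^ 2) := by
  refine Measure.ext_of_lintegral _ fun f hf => ?_
  rw [lintegral_map hf (by fun_prop), Measure.lintegral_compProd hf,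
    lintegral_map hf.lintegral_kernel_prod_right' (by fun_prop),
    lintegral_add_smul_stdGaussian P hX hc hf,
    lintegral_add_smul_stdGaussian P hX hc
      (f := fun q => ∫⁻ ω, f (q.1, ω) ∂(gaussPosterior P X (c ^ 2) q.1))
      (hf.lintegral_kernel_prod_right'.comp measurable_fst)]
  congr 1
  refine lintegral_congr fun x => ?_
  have := isProbabilityMeasure_gaussPosterior P hX (sq_nonneg c) x
  have hpost {h : Ω → ℝ≥0∞} (hh : Measurable h) :=
    lintegral_exp_gaussLogLik_mul P hX (sq_nonneg c) x hh
  simp only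
  rw [hpost (h := fun ω => f (x, ω)) (by fun_prop), hpost measurable_const, lintegral_const,
    measure_univ, mul_one]

end Bayes

section PosteriorMoments

open ProbabilityTheory

variable {E Ω : Type*} [NormedAddCommGroup E] [MeasurableSpace E] [BorelSpace E]
  [SecondCountableTopology E] [MeasurableSpace Ω] (P : Measure Ω) [IsFiniteMeasure P] {X : Ω → E}

theorem memLp_sub_gaussPosterior (hX : Measurable X) {v : ℝ} (hv : 0 < v) (x : E) :
    MemLp (fun ω => X ω - x) 2 (gaussPosterior P X v x) := by
  have hmeas := measurable_exp_gaussLogLik hX v x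
  rw [gaussPosterior_apply P hX, memLp_two_iff_integrable_sq_norm (by fun_prop),
    integrable_tilted_iff (integrable_exp_gaussLogLik P hX hv.le x)]
  refine .of_bound (by fun_prop) (2 * v) (ae_of_all _ fun ω => ?_)
  rw [smul_eq_mul, Real.norm_of_nonneg (by positivity)]
  exact exp_gaussLogLik_mul_norm_sub_sq_le X hv x ω

theorem monotoneOn_integral_norm_sub_sq_gaussPosterior [NeZero P] (hX : Measurable X) (x : E) :
    MonotoneOn (fun v => ∫ ω, ‖X ω - x‖ ^ 2 ∂(gaussPosterior P X v x)) (Set.Ioi 0) := by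
  intro v hv w hw hvw
  rw [Set.mem_Ioi] at hv hw
  set k : ℝ := (2 * v)⁻¹ - (2 * w)⁻¹
  have hk : 0 ≤ k := sub_nonneg.mpr (by gcongr)
  have hexp_v := integrable_exp_gaussLogLik P hX hv.le x
  have hexp_w := integrable_exp_gaussLogLik P hX hw.le x
  have hloglik : gaussLogLik X v x + (fun ω => k * ‖X ω - x‖ ^ 2) = gaussLogLik X w x := by
    ext ω
    simp only [Pi.add_apply, gaussLogLik, k, norm_sub_rev x]
    ring
  have htilt : gaussPosterior P X w x =
      (gaussPosterior P X v x).tilted (fun ω => k * ‖X ω - x‖ ^ 2) := by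
    rw [gaussPosterior_apply P hX, gaussPosterior_apply P hX, tilted_tilted hexp_v, hloglik]
  have hexp_k : Integrable (fun ω => Real.exp (k * ‖X ω - x‖ ^ 2)) (gaussPosterior P X v x) := by
    rw [gaussPosterior_apply P hX, integrable_tilted_iff hexp_v]
    refine hexp_w.congr (ae_of_all _ fun ω => ?_)
    simp only [← hloglik, Pi.add_apply, Real.exp_add, smul_eq_mul]
  have := isProbabilityMeasure_gaussPosterior P hX hv.le x
  have hsq {u : ℝ} (hu : 0 < u) :=
    (memLp_sub_gaussPosterior P hX hu x).integrable_norm_pow two_ne_zero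
  simp only [htilt]
  exact integral_le_integral_tilted_mul hk (hsq hv) hexp_k (htilt ▸ hsq hw)

end PosteriorMoments

section Tweedie

open ProbabilityTheory

variable {E Ω : Type*} [NormedAddCommGroup E] [InnerProductSpace ℝ E] [CompleteSpace E]
  [MeasurableSpace E] [BorelSpace E] [SecondCountableTopology E] [MeasurableSpace Ω]
  (P : Measure Ω) [IsFiniteMeasure P] [NeZero P] {X : Ω → E}

theorem mixtureScore_eq_integral_gaussPosterior (hX : Measurable X) {v : ℝ} (hv : 0 < v) (x : E) :
    mixtureScore P X v x = v⁻¹ • ∫ ω, (X ω - x) ∂(gaussPosterior P X v x) := by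
  have hpos := gaussMixture_pos P hX hv.le x
  have hlog := (hasGradientAt_gaussMixture P hX hv x).hasFDerivAt.log hpos.ne'
  have hgrad : HasGradientAt (fun z => Real.log (gaussMixture P X v z)) ((gaussMixture P X v x)⁻¹ •
      v⁻¹ • ∫ ω, Real.exp (gaussLogLik X v x ω) • (X ω - x) ∂P) x := by
    rw [hasGradientAt_iff_hasFDerivAt, map_smul]
    exact hlog
  rw [mixtureScore, hgrad.gradient, gaussPosterior_apply P hX, integral_tilted, smul_comm]
  simp only [div_eq_inv_mul, mul_smul]
  rw [integral_smul, gaussMixture]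

theorem norm_mixtureScore_sq_le (hX : Measurable X) {v w : ℝ} (hv : 0 < v) (hvw : v ≤ w) (x : E) :
    ‖mixtureScore P X v x‖ ^ 2 ≤
      v⁻¹ ^ 2 * ∫ ω, ‖X ω - x‖ ^ 2 ∂(gaussPosterior P X w x) := by
  have := isProbabilityMeasure_gaussPosterior P hX hv.le x
  rw [mixtureScore_eq_integral_gaussPosterior P hX hv, norm_smul, mul_pow, norm_eq_abs, sq_abs]
  gcongr
  exact (norm_integral_sq_le (memLp_sub_gaussPosterior P hX hv x)).trans <|
    monotoneOn_integral_norm_sub_sq_gaussPosterior P hX x hv (hv.trans_le hvw) hvw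

end Tweedie

section NoisyLaw

open ProbabilityTheory

variable {E Ω : Type*} [NormedAddCommGroup E] [InnerProductSpace ℝ E] [FiniteDimensional ℝ E]
  [MeasurableSpace E] [BorelSpace E] [MeasurableSpace Ω]

/-- Law of `X + c·Z` for a signal `X` under `P` and independent standard Gaussian noise `Z`. -/
def noisyLaw (P : Measure Ω) (X : Ω → E) (c : ℝ) : Measure E :=
  (P.prod (stdGaussian E)).map fun q => X q.1 + c • q.2

theorem measurePreserving_noisyLaw (P : Measure Ω) {X : Ω → E} (hX : Measurable X) (c : ℝ) :
    MeasurePreserving (fun q : Ω × E => X q.1 + c • q.2) (P.prod (stdGaussian E))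
      (noisyLaw P X c) :=
  ⟨by fun_prop, rfl⟩

variable {P : Measure Ω} [IsFiniteMeasure P] {X : Ω → E}

instance isFiniteMeasure_noisyLaw (c : ℝ) : IsFiniteMeasure (noisyLaw P X c) :=
  inferInstanceAs (IsFiniteMeasure (Measure.map _ _))

variable [NeZero P]

theorem measurePreserving_noisyLaw_compProd_gaussPosterior (hX : Measurable X) {c : ℝ}
    (hc : 0 < c) :
    MeasurePreserving (fun q : Ω × E => (X q.1 + c • q.2, q.1)) (P.prod (stdGaussian E))
      (noisyLaw P X c ⊗ₘ gaussPosterior P X (c ^ 2)) :=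
  ⟨by fun_prop, map_add_smul_stdGaussian_eq_compProd P hX hc⟩

theorem memLp_noise_compProd_gaussPosterior (hX : Measurable X) {c : ℝ} (hc : 0 < c) :
    MemLp (fun q : E × Ω => X q.2 - q.1) 2 (noisyLaw P X c ⊗ₘ gaussPosterior P X (c ^ 2)) := by
  rw [← (measurePreserving_noisyLaw_compProd_gaussPosterior hX hc).map_eq,
    memLp_map_measure_iff (by fun_prop) (by fun_prop)]
  have hz : MemLp (fun z : E => -(c • z)) 2 (stdGaussian E) :=
    (IsGaussian.memLp_two_id.const_smul c).neg
  simpa [Function.comp_def] using hz.comp_snd P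

theorem memLp_mixtureScore_noisyLaw (hX : Measurable X) {v c : ℝ} (hv : 0 < v) (hc : 0 < c)
    (hvc : v ≤ c ^ 2) : MemLp (mixtureScore P X v) 2 (noisyLaw P X c) := by
  rw [memLp_two_iff_integrable_sq_norm (by fun_prop)]
  have hnoise :=
    (memLp_noise_compProd_gaussPosterior (P := P) hX hc).integrable_norm_pow two_ne_zero
  refine Integrable.mono'
    ((((Measure.integrable_compProd_iff hnoise.aestronglyMeasurable).mp hnoise).2).const_mul
      (v⁻¹ ^ 2)) (by fun_prop) (ae_of_all _ fun x => ?_)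
  simpa using norm_mixtureScore_sq_le P hX hv hvc x

theorem integral_inner_mixtureScore (hX : Measurable X) {c : ℝ} (hc : 0 < c) {h : E → E}
    (hh : MemLp h 2 (noisyLaw P X c)) :
    ∫ x, inner ℝ (mixtureScore P X (c ^ 2) x) (h x) ∂(noisyLaw P X c) =
      -c⁻¹ * ∫ q, inner ℝ q.2 (h (X q.1 + c • q.2)) ∂(P.prod (stdGaussian E)) := by
  have hjoint := measurePreserving_noisyLaw_compProd_gaussPosterior (P := P) hX hc
  have hc2 : 0 < c ^ 2 := by positivity
  have : IsMarkovKernel (gaussPosterior P X (c ^ 2)) :=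
    ⟨isProbabilityMeasure_gaussPosterior P hX hc2.le⟩
  have hfst : MeasurePreserving Prod.fst (noisyLaw P X c ⊗ₘ gaussPosterior P X (c ^ 2))
      (noisyLaw P X c) := ⟨measurable_fst, Measure.fst_compProd _ _⟩
  have hint : Integrable (fun q : E × Ω => inner ℝ (X q.2 - q.1) (h q.1))
      (noisyLaw P X c ⊗ₘ gaussPosterior P X (c ^ 2)) :=
    integrable_inner_of_memLp_two (memLp_noise_compProd_gaussPosterior hX hc)
      (hh.comp_measurePreserving hfst)
  have hfibre (x : E) : inner ℝ (mixtureScore P X (c ^ 2) x) (h x) =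
      (c ^ 2)⁻¹ * ∫ ω, inner ℝ (X ω - x) (h x) ∂(gaussPosterior P X (c ^ 2) x) := by
    have hsub := (memLp_sub_gaussPosterior P hX hc2 x).integrable one_le_two
    rw [mixtureScore_eq_integral_gaussPosterior P hX hc2, real_inner_smul_left]
    simp only [real_inner_comm (h x), integral_inner hsub]
  calc ∫ x, inner ℝ (mixtureScore P X (c ^ 2) x) (h x) ∂(noisyLaw P X c)
      = (c ^ 2)⁻¹ * ∫ q, inner ℝ (X q.2 - q.1) (h q.1)
          ∂(noisyLaw P X c ⊗ₘ gaussPosterior P X (c ^ 2)) := by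
        simp_rw [hfibre]
        rw [integral_const_mul, Measure.integral_compProd hint]
    _ = (c ^ 2)⁻¹ * ∫ q, -c * inner ℝ q.2 (h (X q.1 + c • q.2)) ∂(P.prod (stdGaussian E)) := by
        rw [← hjoint.map_eq] at hint ⊢
        rw [integral_map hjoint.aemeasurable hint.aestronglyMeasurable]
        simp only [sub_add_cancel_left, inner_neg_left, real_inner_smul_left, neg_mul]
    _ = -c⁻¹ * ∫ q, inner ℝ q.2 (h (X q.1 + c • q.2)) ∂(P.prod (stdGaussian E)) := by
        rw [integral_const_mul]
        field_simp

end NoisyLaw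

section Rotation

open ProbabilityTheory

variable {E Ω : Type*} [NormedAddCommGroup E] [InnerProductSpace ℝ E] [FiniteDimensional ℝ E]
  [MeasurableSpace E] [BorelSpace E] [MeasurableSpace Ω]

theorem exists_cos_eq_and_sin_eq {a b : ℝ} (h : a ^ 2 + b ^ 2 = 1) :
    ∃ θ : ℝ, Real.cos θ = a ∧ Real.sin θ = b := by
  have hnorm : ‖(⟨a, b⟩ : ℂ)‖ = 1 := by
    rw [Complex.norm_def, Complex.normSq_mk, ← sq, ← sq, h, Real.sqrt_one]
  have hne : (⟨a, b⟩ : ℂ) ≠ 0 := norm_ne_zero_iff.mp (by simp [hnorm])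
  exact ⟨Complex.arg ⟨a, b⟩, by simp [Complex.cos_arg hne, hnorm], by simp [Complex.sin_arg, hnorm]⟩

theorem measurePreserving_rotate_noise (μ : Measure Ω) [SFinite μ] {a b : ℝ}
    (h : a ^ 2 + b ^ 2 = 1) :
    MeasurePreserving
      (fun p : (Ω × E) × E => ((p.1.1, a • p.1.2 + b • p.2), -b • p.1.2 + a • p.2))
      ((μ.prod (stdGaussian E)).prod (stdGaussian E))
      ((μ.prod (stdGaussian E)).prod (stdGaussian E)) := by
  obtain ⟨θ, rfl, rfl⟩ := exists_cos_eq_and_sin_eq h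
  have hrot : MeasurePreserving (ContinuousLinearMap.rotation θ)
      ((stdGaussian E).prod (stdGaussian E)) ((stdGaussian E).prod (stdGaussian E)) :=
    ⟨by fun_prop, IsGaussian.map_rotation_eq_self integral_id_stdGaussian θ⟩
  have hassoc := measurePreserving_prodAssoc μ (stdGaussian E) (stdGaussian E)
  exact (hassoc.symm.comp ((MeasurePreserving.id μ).prod hrot)).comp hassoc

theorem integral_inner_snd_stdGaussian {μ : Measure Ω} [IsFiniteMeasure μ] {k : Ω → E}
    (hk : MemLp k 2 μ) : ∫ p, inner ℝ p.2 (k p.1) ∂(μ.prod (stdGaussian E)) = 0 := by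
  have hid : Integrable (fun z : E => z) (stdGaussian E) := IsGaussian.integrable_id
  have hint : Integrable (fun p : Ω × E => inner ℝ p.2 (k p.1)) (μ.prod (stdGaussian E)) :=
    integrable_inner_of_memLp_two (IsGaussian.memLp_two_id.comp_snd μ) (hk.comp_fst _)
  rw [integral_prod _ hint]
  simp_rw [real_inner_comm (k _), integral_inner hid, integral_id_stdGaussian, inner_zero_right,
    integral_zero]

variable {P : Measure Ω} [IsFiniteMeasure P] {X : Ω → E}

theorem measurePreserving_noisyLaw_add_smul (hX : Measurable X) {c ρ r : ℝ} (hr : r ≠ 0)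
    (h : c ^ 2 + ρ ^ 2 = r ^ 2) :
    MeasurePreserving (fun p : E × E => p.1 + ρ • p.2) ((noisyLaw P X c).prod (stdGaussian E))
      (noisyLaw P X r) := by
  have hunit : (c / r) ^ 2 + (ρ / r) ^ 2 = 1 := by
    field_simp
    exact h
  have hrot := ((measurePreserving_noisyLaw P hX r).comp measurePreserving_fst).comp
    (measurePreserving_rotate_noise P hunit)
  have hsource := (measurePreserving_noisyLaw P hX c).prod (MeasurePreserving.id (stdGaussian E))
  refine ⟨by fun_prop, ?_⟩
  rw [← hsource.map_eq, Measure.map_map (by fun_prop) hsource.measurable, ← hrot.map_eq]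
  congr 1
  ext p
  simp only [Function.comp_apply, Prod.map, id, smul_add, smul_smul, mul_div_cancel₀ _ hr,
    add_assoc]

theorem integral_inner_noise_add_smul (hX : Measurable X) {c ρ r : ℝ} (hr : r ≠ 0)
    (h : c ^ 2 + ρ ^ 2 = r ^ 2) {f : E → E} (hf : MemLp f 2 (noisyLaw P X r)) :
    ∫ p, inner ℝ p.1.2 (f (X p.1.1 + c • p.1.2 + ρ • p.2))
        ∂((P.prod (stdGaussian E)).prod (stdGaussian E)) =
      c / r * ∫ q, inner ℝ q.2 (f (X q.1 + r • q.2)) ∂(P.prod (stdGaussian E)) := by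
  -- Rotating the noises turns `c Z + ρ Z'` into `r U`, where `Z = (c / r) U - (ρ / r) W`; the
  -- independent centred `W` integrates to zero.
  set γ := stdGaussian E
  set k : Ω × E → E := fun q => f (X q.1 + r • q.2)
  have hunit : (c / r) ^ 2 + (ρ / r) ^ 2 = 1 := by
    field_simp
    exact h
  have hrot := measurePreserving_rotate_noise (E := E) P hunit
  have hk : MemLp k 2 (P.prod γ) := hf.comp_measurePreserving (measurePreserving_noisyLaw P hX r)
  have hkept : Integrable (fun p => inner ℝ p.1.2 (k p.1)) ((P.prod γ).prod γ) :=
    (integrable_inner_of_memLp_two (IsGaussian.memLp_two_id.comp_snd P) hk).comp_fst γ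
  have hlost : Integrable (fun p => inner ℝ p.2 (k p.1)) ((P.prod γ).prod γ) :=
    integrable_inner_of_memLp_two (IsGaussian.memLp_two_id.comp_snd _) (hk.comp_fst γ)
  have hint := (hkept.const_mul (c / r)).sub (hlost.const_mul (ρ / r))
  calc _ = ∫ p, (c / r * inner ℝ p.1.2 (k p.1) - ρ / r * inner ℝ p.2 (k p.1))
          ∂((P.prod γ).prod γ) := by
        conv_rhs => rw [← hrot.map_eq]
        rw [integral_map hrot.aemeasurable (by rw [hrot.map_eq]; exact hint.aestronglyMeasurable)]
        congr with p
        have hsum : r • ((c / r) • p.1.2 + (ρ / r) • p.2) = c • p.1.2 + ρ • p.2 := by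
          rw [smul_add, smul_smul, smul_smul, mul_div_cancel₀ _ hr, mul_div_cancel₀ _ hr]
        have hinv : p.1.2 = (c / r) • ((c / r) • p.1.2 + (ρ / r) • p.2) -
            (ρ / r) • (-(ρ / r) • p.1.2 + (c / r) • p.2) := by
          linear_combination (norm := module) (-hunit) • p.1.2
        simp only [k, hsum, ← real_inner_smul_left, ← inner_sub_left, ← hinv, add_assoc]
    _ = c / r * ∫ q, inner ℝ q.2 (k q) ∂(P.prod γ) := by
        rw [integral_sub (hkept.const_mul _) (hlost.const_mul _), integral_const_mul,
          integral_const_mul, integral_inner_snd_stdGaussian hk, mul_zero, sub_zero,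
          integral_fun_fst (fun q : Ω × E => inner ℝ q.2 (k q)), probReal_univ, one_smul]

end Rotation

section ReverseMartingale

open ProbabilityTheory

theorem ae_memLp_two_of_memLp_two_prod {α β E : Type*} [MeasurableSpace α] [MeasurableSpace β]
    [NormedAddCommGroup E] {μ : Measure α} [SFinite μ] {ν : Measure β} [SFinite ν] {f : α × β → E}
    (hf : MemLp f 2 (μ.prod ν)) : ∀ᵐ y ∂ν, MemLp (fun x => f (x, y)) 2 μ := by
  filter_upwards [(hf.integrable_norm_pow two_ne_zero).prod_left_ae,
    hf.aestronglyMeasurable.prodMk_right] with y hsq hmeas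
  exact (memLp_two_iff_integrable_sq_norm hmeas).mpr hsq

variable {E Ω : Type*} [NormedAddCommGroup E] [InnerProductSpace ℝ E] [FiniteDimensional ℝ E]
  [MeasurableSpace E] [BorelSpace E] [MeasurableSpace Ω] {P : Measure Ω} [IsFiniteMeasure P]
  [NeZero P] {X : Ω → E}

theorem integral_inner_mixtureScore_add_smul (hX : Measurable X) {c ρ r : ℝ} (hc : 0 < c)
    (hr : 0 < r) (h : c ^ 2 + ρ ^ 2 = r ^ 2) {f : E → E} (hf : MemLp f 2 (noisyLaw P X r)) :
    ∫ p, inner ℝ (mixtureScore P X (c ^ 2) p.1) (f (p.1 + ρ • p.2))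
        ∂((noisyLaw P X c).prod (stdGaussian E)) =
      ∫ y, inner ℝ (mixtureScore P X (r ^ 2) y) (f y) ∂(noisyLaw P X r) := by
  set γ := stdGaussian E
  have hfy : MemLp (fun p : E × E => f (p.1 + ρ • p.2)) 2 ((noisyLaw P X c).prod γ) :=
    hf.comp_measurePreserving (measurePreserving_noisyLaw_add_smul hX hr.ne' h)
  have hscore := (memLp_mixtureScore_noisyLaw (P := P) hX (by positivity) hc le_rfl).comp_fst γ
  have hnoise : Integrable (fun p : (Ω × E) × E =>
      inner ℝ p.1.2 (f (X p.1.1 + c • p.1.2 + ρ • p.2))) ((P.prod γ).prod γ) :=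
    integrable_inner_of_memLp_two ((IsGaussian.memLp_two_id.comp_snd P).comp_fst γ)
      (hfy.comp_measurePreserving ((measurePreserving_noisyLaw P hX c).prod (.id γ)))
  calc _ = ∫ z, ∫ x, inner ℝ (mixtureScore P X (c ^ 2) x) (f (x + ρ • z)) ∂(noisyLaw P X c) ∂γ :=
        integral_prod_symm _ (integrable_inner_of_memLp_two hscore hfy)
    _ = ∫ z, -c⁻¹ * ∫ q, inner ℝ q.2 (f (X q.1 + c • q.2 + ρ • z)) ∂(P.prod γ) ∂γ := by
        refine integral_congr_ae ?_
        filter_upwards [ae_memLp_two_of_memLp_two_prod hfy] with z hz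
        exact integral_inner_mixtureScore hX hc hz
    _ = -c⁻¹ * (c / r * ∫ q, inner ℝ q.2 (f (X q.1 + r • q.2)) ∂(P.prod γ)) := by
        rw [integral_const_mul, ← integral_prod_symm _ hnoise,
          integral_inner_noise_add_smul hX hr.ne' h hf]
    _ = ∫ y, inner ℝ (mixtureScore P X (r ^ 2) y) (f y) ∂(noisyLaw P X r) := by
        rw [integral_inner_mixtureScore hX hr hf, ← mul_assoc]
        congr 1
        field_simp

theorem integral_norm_mixtureScore_sub_smul_sq_le (hX : Measurable X) {c ρ r : ℝ} (hc : 0 < c)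
    (hr : 0 < r) (h : c ^ 2 + ρ ^ 2 = r ^ 2) (β : ℝ) :
    ∫ p, ‖mixtureScore P X (c ^ 2) p.1 - β • mixtureScore P X (r ^ 2) (p.1 + ρ • p.2)‖ ^ 2
        ∂((noisyLaw P X c).prod (stdGaussian E)) ≤
      ∫ p, ‖mixtureScore P X (c ^ 2) p.1 - mixtureScore P X (c ^ 2) (p.1 + ρ • p.2)‖ ^ 2
          ∂((noisyLaw P X c).prod (stdGaussian E)) +
        (1 - β) ^ 2 * ∫ p, ‖mixtureScore P X (c ^ 2) p.1‖ ^ 2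
          ∂((noisyLaw P X c).prod (stdGaussian E)) := by
  have hstep := measurePreserving_noisyLaw_add_smul (P := P) hX hr.ne' h
  have hscore {v : ℝ} (hv : 0 < v) (hvr : v ≤ r ^ 2) :=
    memLp_mixtureScore_noisyLaw (P := P) hX hv hr hvr
  have hmartingale {f : E → E} (hf : MemLp f 2 (noisyLaw P X r)) :
      ∫ p, inner ℝ (mixtureScore P X (c ^ 2) p.1) (f (p.1 + ρ • p.2))
          ∂((noisyLaw P X c).prod (stdGaussian E)) =
        ∫ p, inner ℝ (mixtureScore P X (r ^ 2) (p.1 + ρ • p.2)) (f (p.1 + ρ • p.2))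
          ∂((noisyLaw P X c).prod (stdGaussian E)) := by
    rw [integral_inner_mixtureScore_add_smul hX hc hr h hf, ← hstep.map_eq, integral_map]
    · fun_prop
    · rw [hstep.map_eq]
      exact (integrable_inner_of_memLp_two (hscore (by positivity) le_rfl) hf).aestronglyMeasurable
  have hc_score := hscore (v := c ^ 2) (by positivity) (by nlinarith)
  have hr_score := hscore (v := r ^ 2) (by positivity) le_rfl
  exact integral_norm_sub_smul_sq_le_of_integral_inner_eq
    ((memLp_mixtureScore_noisyLaw hX (by positivity) hc le_rfl).comp_fst _)
    (hc_score.comp_measurePreserving hstep) (hr_score.comp_measurePreserving hstep)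
    (hmartingale hr_score) (hmartingale hc_score) β

end ReverseMartingale

section Scaling

variable {E Ω : Type*} [NormedAddCommGroup E] [InnerProductSpace ℝ E] {a : ℝ}

theorem gaussLogLik_smul (ha : a ≠ 0) (X : Ω → E) (v : ℝ) (x : E) (ω : Ω) :
    gaussLogLik (fun ω => a • X ω) (a ^ 2 * v) (a • x) ω = gaussLogLik X v x ω := by
  rw [gaussLogLik, gaussLogLik, ← smul_sub, norm_smul, mul_pow, norm_eq_abs, sq_abs,
    mul_left_comm 2, neg_div, neg_div, mul_div_mul_left _ _ (pow_ne_zero 2 ha)]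

theorem mixtureScore_smul [CompleteSpace E] [MeasurableSpace Ω] (ha : a ≠ 0) (P : Measure Ω)
    (X : Ω → E) (v : ℝ) (x : E) :
    mixtureScore P (fun ω => a • X ω) (a ^ 2 * v) (a • x) = a⁻¹ • mixtureScore P X v x := by
  have hmixture (z : E) :
      gaussMixture P (fun ω => a • X ω) (a ^ 2 * v) z = gaussMixture P X v (a⁻¹ • z) := by
    conv_lhs => rw [← smul_inv_smul₀ ha z]
    simp only [gaussMixture, gaussLogLik_smul ha]
  simp only [mixtureScore, hmixture, gradient]
  rw [fderiv_comp_smul (f := fun z => Real.log (gaussMixture P X v z)), inv_smul_smul₀ ha, map_smul]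

end Scaling

section ForwardProcess

open ProbabilityTheory

variable {d : ℕ} {P : Measure (Vec d)} {g : ℝ → ℝ} {t s : ℝ}

theorem stdGauss_eq_stdGaussian (d : ℕ) : stdGauss d = stdGaussian (Vec d) := by
  rw [stdGaussian_eq_withDensity, finrank_euclideanSpace_fin]
  simp only [stdGauss, gaussMeasure, gaussDensity, mul_one, sub_zero]

theorem sigmaSq_pos (h : 0 < Gvar g 0 t) : 0 < sigmaSq g t :=
  sub_pos.mpr (Real.exp_lt_one_iff.mpr (neg_lt_zero.mpr h))

theorem fwdScore_eq_mixtureScore [IsFiniteMeasure P] [NeZero P] (h : 0 < sigmaSq g t) :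
    fwdScore d P g t = mixtureScore P (fun y => alphaF g 0 t • y) (sigmaSq g t) := by
  have hlog (z : Vec d) : Real.log (forwardDensity d P g t z) =
      Real.log ((2 * π * sigmaSq g t) ^ (-(d : ℝ) / 2)) +
        Real.log (gaussMixture P (fun y => alphaF g 0 t • y) (sigmaSq g t) z) :=
    Real.log_mul (by positivity) (gaussMixture_pos P (by fun_prop) h.le z).ne'
  ext1 x
  simp only [fwdScore, scoreOf, mixtureScore, hlog, gradient, fderiv_const_add]

theorem measurePreserving_xt_prod [SFinite P] :
    MeasurePreserving (fun ω => (xt d g t ω, ω.2.2)) (coupleMeasure d P)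
      ((noisyLaw P (fun y => alphaF g 0 t • y) √(sigmaSq g t)).prod (stdGaussian (Vec d))) := by
  rw [coupleMeasure, stdGauss_eq_stdGaussian]
  exact ((measurePreserving_noisyLaw P (by fun_prop) _).prod (.id _)).comp
    (measurePreserving_prodAssoc P _ _).symm

theorem alphaF_pos (g : ℝ → ℝ) (t s : ℝ) : 0 < alphaF g t s := Real.exp_pos _

theorem alphaF_le_one (hts : t ≤ s) : alphaF g t s ≤ 1 := by
  have h : 0 ≤ Gvar g t s := intervalIntegral.integral_nonneg hts fun u _ => sq_nonneg _
  exact Real.exp_le_one_iff.mpr (by linarith)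

theorem inv_alphaF_sq_sub_one_nonneg (hts : t ≤ s) : 0 ≤ (alphaF g t s)⁻¹ ^ 2 - 1 :=
  sub_nonneg.mpr (one_le_pow₀ ((one_le_inv₀ (alphaF_pos g t s)).mpr (alphaF_le_one hts)))

theorem Gvar_add_Gvar {r : ℝ} (hG : Gvar g r t ≠ 0)
    (hg : IntervalIntegrable (fun u => g u ^ 2) volume t s) :
    Gvar g r t + Gvar g t s = Gvar g r s :=
  intervalIntegral.integral_add_adjacent_intervals
    (intervalIntegral.intervalIntegrable_of_integral_ne_zero hG) hg

theorem alphaF_mul_alphaF {r : ℝ} (hadd : Gvar g r t + Gvar g t s = Gvar g r s) :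
    alphaF g t s * alphaF g r t = alphaF g r s := by
  simp only [alphaF, ← Real.exp_add, ← hadd]
  ring_nf

theorem sigmaSq_eq_alphaF_sq_mul (hadd : Gvar g 0 t + Gvar g t s = Gvar g 0 s) :
    sigmaSq g s = alphaF g t s ^ 2 * (sigmaSq g t + ((alphaF g t s)⁻¹ ^ 2 - 1)) := by
  have hexp : Real.exp (-Gvar g 0 s) = alphaF g t s ^ 2 * Real.exp (-Gvar g 0 t) := by
    rw [alphaF, ← Real.exp_nat_mul, ← Real.exp_add, ← hadd]
    ring_nf
  have hα := (alphaF_pos g t s).ne'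
  rw [sigmaSq, sigmaSq, hexp]
  field_simp
  ring

theorem xts_eq_alphaF_smul (ω : Vec d × Vec d × Vec d) :
    xts d g t s ω = alphaF g t s • (xt d g t ω + √((alphaF g t s)⁻¹ ^ 2 - 1) • ω.2.2) := by
  have hα := alphaF_pos g t s
  have hsqrt : √(1 - alphaF g t s ^ 2) = alphaF g t s * √((alphaF g t s)⁻¹ ^ 2 - 1) := by
    rw [← Real.sqrt_sq hα.le, ← Real.sqrt_mul (sq_nonneg _), Real.sqrt_sq hα.le]
    field_simp
  rw [xts, hsqrt, smul_add, smul_smul]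

variable [IsFiniteMeasure P] [NeZero P]

theorem fwdScore_alphaF_smul (hts : t ≤ s) (hσ : 0 < sigmaSq g t)
    (hadd : Gvar g 0 t + Gvar g t s = Gvar g 0 s) (y : Vec d) :
    fwdScore d P g s (alphaF g t s • y) = (alphaF g t s)⁻¹ •
      mixtureScore P (fun z => alphaF g 0 t • z) (sigmaSq g t + ((alphaF g t s)⁻¹ ^ 2 - 1)) y := by
  have hα := alphaF_pos g t s
  have hρ := inv_alphaF_sq_sub_one_nonneg (g := g) hts
  have hσs : 0 < sigmaSq g s := sigmaSq_eq_alphaF_sq_mul hadd ▸ by positivity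
  rw [fwdScore_eq_mixtureScore hσs, ← mixtureScore_smul hα.ne', ← sigmaSq_eq_alphaF_sq_mul hadd]
  simp only [smul_smul, alphaF_mul_alphaF hadd]

theorem statement7_general (hts : t ≤ s) (hG : 0 < Gvar g 0 t)
    (hg : IntervalIntegrable (fun u => g u ^ 2) volume t s) :
    ∫ ω, ‖fwdScore d P g t (xt d g t ω) - fwdScore d P g s (xts d g t s ω)‖ ^ 2
        ∂(coupleMeasure d P) ≤
      ∫ ω, ‖fwdScore d P g t (xt d g t ω) -
          fwdScore d P g t ((alphaF g t s)⁻¹ • xts d g t s ω)‖ ^ 2 ∂(coupleMeasure d P) +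
        (1 - (alphaF g t s)⁻¹) ^ 2 *
          ∫ ω, ‖fwdScore d P g t (xt d g t ω)‖ ^ 2 ∂(coupleMeasure d P) := by
  have hα := alphaF_pos g t s
  have hσ := sigmaSq_pos hG
  have hρ := inv_alphaF_sq_sub_one_nonneg (g := g) hts
  have hr : 0 < sigmaSq g t + ((alphaF g t s)⁻¹ ^ 2 - 1) := by positivity
  have hbound := integral_norm_mixtureScore_sub_smul_sq_le (P := P)
    (X := fun z => alphaF g 0 t • z) (ρ := √((alphaF g t s)⁻¹ ^ 2 - 1)) (by fun_prop)
    (Real.sqrt_pos.mpr hσ) (Real.sqrt_pos.mpr hr)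
    (by rw [Real.sq_sqrt hσ.le, Real.sq_sqrt hρ, Real.sq_sqrt hr.le]) (alphaF g t s)⁻¹
  have hcouple := measurePreserving_xt_prod (P := P) (g := g) (t := t)
  rw [Real.sq_sqrt hσ.le, Real.sq_sqrt hr.le, ← hcouple.map_eq] at hbound
  rw [integral_map hcouple.aemeasurable (by fun_prop),
    integral_map hcouple.aemeasurable (by fun_prop),
    integral_map hcouple.aemeasurable (Measurable.aestronglyMeasurable (by fun_prop))] at hbound
  simpa only [xts_eq_alphaF_smul, fwdScore_alphaF_smul hts hσ (Gvar_add_Gvar hG.ne' hg),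
    inv_smul_smul₀ hα.ne', fwdScore_eq_mixtureScore hσ] using hbound

end ForwardProcess

theorem Gvar_pos {g : ℝ → ℝ} {t s : ℝ} (hts : t < s) (hg : ContinuousOn g (Set.Icc t s))
    (hpos : ∀ u ∈ Set.Ioo t s, 0 < g u) : 0 < Gvar g t s :=
  intervalIntegral.intervalIntegral_pos_of_pos_on
    ((hg.pow 2).intervalIntegrable_of_Icc hts.le) (fun u hu => pow_pos (hpos u hu) 2) hts

/-- Lemma `time-discrete`: the time-discretization error of the score is
absorbed into the space-discretization error. -/
theorem statement7 :
    ∀ (d : ℕ) (T t s : ℝ) (P : Measure (Vec d)) (g : ℝ → ℝ),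
      IsProbabilityMeasure P →
      ContinuousOn g (Set.Icc 0 T) → (∀ u ∈ Set.Ioc (0 : ℝ) T, 0 < g u) →
      0 < t → t ≤ s → s ≤ T →
      (∫ ω, ‖fwdScore d P g t (xt d g t ω) - fwdScore d P g s (xts d g t s ω)‖ ^ 2
          ∂(coupleMeasure d P)) ≤
        4 * (∫ ω, ‖fwdScore d P g t (xt d g t ω) -
              fwdScore d P g t ((alphaF g t s)⁻¹ • xts d g t s ω)‖ ^ 2
            ∂(coupleMeasure d P)) +
        2 * (∫ ω, ‖fwdScore d P g t (xt d g t ω)‖ ^ 2 ∂(coupleMeasure d P)) *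
          (1 - (alphaF g t s)⁻¹) ^ 2 := by
  intro d T t s P g hP hg hpos ht hts hsT
  have hsub : Set.Icc t s ⊆ Set.Icc 0 T := Set.Icc_subset_Icc ht.le hsT
  have hG : 0 < Gvar g 0 t := Gvar_pos ht (hg.mono (Set.Icc_subset_Icc_right (hts.trans hsT)))
    fun u hu => hpos u ⟨hu.1, hu.2.le.trans (hts.trans hsT)⟩
  have hbound := statement7_general (d := d) (P := P) hts hG
    (((hg.mono hsub).pow 2).intervalIntegrable_of_Icc hts)
  have hspace : 0 ≤ ∫ ω, ‖fwdScore d P g t (xt d g t ω) -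
      fwdScore d P g t ((alphaF g t s)⁻¹ • xts d g t s ω)‖ ^ 2 ∂(coupleMeasure d P) := by positivity
  have hscale : 0 ≤ (1 - (alphaF g t s)⁻¹) ^ 2 *
      ∫ ω, ‖fwdScore d P g t (xt d g t ω)‖ ^ 2 ∂(coupleMeasure d P) := by positivity
  linarith

end DiffusionKL
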